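/- arXiv:2505.13411 — 2 statements merged into one kernel-verified Lean document; each statement's English description precedes it below -/
import Mathlib

section
/- If S and S' are 3-element subsets of ZMod 12 whose multisets of pairwise distances {d(x,y) : {x,y} ⊆ S, x ≠ y} and {d(x,y) : {x,y} ⊆ S', x ≠ y} are equal, then S and S' are dihedrally equivalent, i.e., there exists t ∈ ZMod 12 with S' = {x + t : x ∈ S} or S' = {t − x : x ∈ S}. (Triads with the same set of pairwise intervals are translates or inversions of one another.) -/
/-!
The pairs of a three-element set correspond to its points (each pair to the point it omits), so any
matching of the distances of `S` with those of `S'` comes from a matching of the points: the two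
triples can be labelled `a, b, c` and `a', b', c'` with corresponding distances equal.

Equal distances mean equal differences up to sign (`sub_eq_or_of_dist12_eq`). With
`u = b - a` and `v = c - a`, the differences `u', v'` of the second triple are therefore `±u, ±v`.
Equal signs give a translation or a reflection. If the signs are opposite, comparing
`u' - v' = ±(u + v)` with `±(u - v)` forces `2u = 0` or `2v = 0`, so one of the two signs
may be switched, which reduces to equal signs (`dihEquiv_of_dist12_eq`).
-/

/-- The distance between two elements of `ZMod 12`: `min r (12 - r)` where `r` is the
canonical representative of `x - y`. -/
def dist12 (x y : ZMod 12) : ℕ := min (x - y).val (12 - (x - y).val)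

theorem dist12_symm : ∀ x y : ZMod 12, dist12 x y = dist12 y x := by decide

/-- The multiset of pairwise distances `d(x,y)` over unordered pairs `{x,y} ⊆ S` with
`x ≠ y`. -/
def distMultiset (S : Finset (ZMod 12)) : Multiset ℕ :=
  (S.sym2.filter (fun p => ¬ p.IsDiag)).val.map (Sym2.lift ⟨dist12, dist12_symm⟩)

/-- Two subsets of `ZMod 12` are dihedrally equivalent if one is a translate of the
other or a translate of the other's reflection. -/
def DihEquiv (S S' : Finset (ZMod 12)) : Prop :=
  ∃ t : ZMod 12, S' = S.image (fun x => x + t) ∨ S' = S.image (fun x => t - x)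

theorem sub_eq_or_of_dist12_eq {x y x' y' : ZMod 12} (h : dist12 x y = dist12 x' y') :
    x' - y' = x - y ∨ x' - y' = -(x - y) := by
  have key : ∀ r s : ZMod 12, min r.val (12 - r.val) = min s.val (12 - s.val) →
      s = r ∨ s = -r := by decide
  exact key _ _ h

theorem distMultiset_triple {a b c : ZMod 12} (hab : a ≠ b) (hac : a ≠ c) (hbc : b ≠ c) :
    distMultiset {a, b, c} = {dist12 a b, dist12 a c, dist12 b c} := by
  have h : (({a, b, c} : Finset (ZMod 12)).sym2.filter (fun p => ¬ p.IsDiag))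
      = {s(a, b), s(a, c), s(b, c)} := by
    ext p
    induction p using Sym2.ind with
    | _ x y =>
      simp only [Finset.mem_filter, Finset.mk_mem_sym2_iff, Finset.mem_insert,
        Finset.mem_singleton, Sym2.mk_isDiag_iff, Sym2.eq_iff]
      grind
  have h1 : s(a, b) ∉ ({s(a, c), s(b, c)} : Finset (Sym2 (ZMod 12))) := by
    simp only [Finset.mem_insert, Finset.mem_singleton, Sym2.eq_iff]
    grind
  have h2 : s(a, c) ∉ ({s(b, c)} : Finset (Sym2 (ZMod 12))) := by
    simp only [Finset.mem_singleton, Sym2.eq_iff]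
    grind
  rw [distMultiset, h, Finset.insert_val_of_notMem h1, Finset.insert_val_of_notMem h2]
  rfl

/-- A distance-preserving bijection between triples is induced by a translation or a reflection. -/
theorem dihEquiv_of_dist12_eq {a b c a' b' c' : ZMod 12}
    (hab : dist12 a b = dist12 a' b') (hac : dist12 a c = dist12 a' c')
    (hbc : dist12 b c = dist12 b' c') :
    DihEquiv {a, b, c} {a', b', c'} := by
  have key : (b' = b + (a' - a) ∧ c' = c + (a' - a)) ∨
      (b' = (a' + a) - b ∧ c' = (a' + a) - c) := by
    rcases sub_eq_or_of_dist12_eq hab with h1 | h1 <;>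
    rcases sub_eq_or_of_dist12_eq hac with h2 | h2 <;>
    rcases sub_eq_or_of_dist12_eq hbc with h3 | h3 <;>
    grind
  rcases key with ⟨rfl, rfl⟩ | ⟨rfl, rfl⟩
  · exact ⟨a' - a, Or.inl (by simp [Finset.image_insert])⟩
  · exact ⟨a' + a, Or.inr (by simp [Finset.image_insert])⟩

theorem triple_eq_cases {p q r p' q' r' : ℕ}
    (h : ({p, q, r} : Multiset ℕ) = {p', q', r'}) :
    (p = p' ∧ q = q' ∧ r = r') ∨ (p = p' ∧ q = r' ∧ r = q') ∨
    (p = q' ∧ q = p' ∧ r = r') ∨ (p = q' ∧ q = r' ∧ r = p') ∨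
    (p = r' ∧ q = p' ∧ r = q') ∨ (p = r' ∧ q = q' ∧ r = p') := by
  have hp : p ∈ ({p', q', r'} : Multiset ℕ) := by rw [← h]; simp
  have pair : ∀ {x y z w : ℕ}, ({x, y} : Multiset ℕ) = {z, w} →
      (x = z ∧ y = w) ∨ (x = w ∧ y = z) := by
    intro x y z w e
    have hx : x ∈ ({z, w} : Multiset ℕ) := by rw [← e]; simp
    simp only [Multiset.insert_eq_cons, Multiset.mem_cons, Multiset.mem_singleton] at hx
    rcases hx with rfl | rfl
    · simp_all
    · rw [Multiset.pair_comm z] at e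
      simp_all
  simp only [Multiset.insert_eq_cons, Multiset.mem_cons, Multiset.mem_singleton] at hp h
  rcases hp with rfl | rfl | rfl
  · have := pair ((Multiset.cons_inj_right _).1 h)
    tauto
  · rw [Multiset.cons_swap p'] at h
    have := pair ((Multiset.cons_inj_right _).1 h)
    tauto
  · rw [← Multiset.insert_eq_cons q', Multiset.pair_comm q', Multiset.insert_eq_cons,
      Multiset.cons_swap p'] at h
    have := pair ((Multiset.cons_inj_right _).1 h)
    tauto

/-- Triads with the same multiset of pairwise distances are dihedrally equivalent. -/
theorem dihEquiv_of_distMultiset_eq (S S' : Finset (ZMod 12))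
    (hS : S.card = 3) (hS' : S'.card = 3)
    (hd : distMultiset S = distMultiset S') : DihEquiv S S' := by
  obtain ⟨a, b, c, hab, hac, hbc, rfl⟩ := Finset.card_eq_three.1 hS
  obtain ⟨x, y, z, hxy, hxz, hyz, rfl⟩ := Finset.card_eq_three.1 hS'
  rw [distMultiset_triple hab hac hbc, distMultiset_triple hxy hxz hyz] at hd
  have s1 := dist12_symm x y
  have s2 := dist12_symm x z
  have s3 := dist12_symm y z
  -- In each case `a` goes to the common point of the pairs matched with `{a, b}` and `{a, c}`.
  rcases triple_eq_cases hd with ⟨h1, h2, h3⟩ | ⟨h1, h2, h3⟩ | ⟨h1, h2, h3⟩ | ⟨h1, h2, h3⟩ |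
    ⟨h1, h2, h3⟩ | ⟨h1, h2, h3⟩
  · exact dihEquiv_of_dist12_eq h1 h2 h3
  · rw [show ({x, y, z} : Finset (ZMod 12)) = {y, x, z} by grind]
    exact dihEquiv_of_dist12_eq (h1.trans s1) h2 h3
  · rw [show ({x, y, z} : Finset (ZMod 12)) = {x, z, y} by grind]
    exact dihEquiv_of_dist12_eq h1 h2 (h3.trans s3)
  · rw [show ({x, y, z} : Finset (ZMod 12)) = {z, x, y} by grind]
    exact dihEquiv_of_dist12_eq (h1.trans s2) (h2.trans s3) h3
  · rw [show ({x, y, z} : Finset (ZMod 12)) = {y, z, x} by grind]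
    exact dihEquiv_of_dist12_eq h1 (h2.trans s1) (h3.trans s2)
  · rw [show ({x, y, z} : Finset (ZMod 12)) = {z, y, x} by grind]
    exact dihEquiv_of_dist12_eq (h1.trans s3) (h2.trans s2) (h3.trans s1)
end

section
/- Let S be a 3-element subset of ZMod 12 and let O(S) be the set of all 3-element subsets dihedrally equivalent to S. If the three pairwise distances of S are pairwise distinct then |O(S)| = 24; if S has exactly two distinct pairwise distances then |O(S)| = 12; and if all three pairwise distances of S are equal then |O(S)| = 4. -/
/-- The number of distinct pairwise distances appearing in `S`. -/
def numDistinct (S : Finset (ZMod 12)) : ℕ :=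
  (((S ×ˢ S).filter (fun p => p.1 ≠ p.2)).image (fun p => dist12 p.1 p.2)).card

instance : ∀ S S' : Finset (ZMod 12), Decidable (DihEquiv S S') := fun S S' => by
  unfold DihEquiv; infer_instance

/-- The set of all 3-element subsets of `ZMod 12` dihedrally equivalent to `S`. -/
def orbit (S : Finset (ZMod 12)) : Finset (Finset (ZMod 12)) :=
  Finset.univ.filter (fun S' => S'.card = 3 ∧ DihEquiv S S')

/-- The binary code of a subset of `ZMod 12`: the number whose binary digits equal to `1` sit at
the positions of the canonical representatives of the elements. -/
def code (S : Finset (ZMod 12)) : ℕ := ∑ x ∈ S, 2 ^ x.val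

theorem code_injective : Function.Injective code := by
  intro S S' h
  have key : ∀ U : Finset (ZMod 12), code U = ∑ i ∈ U.image ZMod.val, 2 ^ i := fun U =>
    (Finset.sum_image (ZMod.val_injective 12).injOn).symm
  rw [key, key] at h
  exact Finset.image_injective (ZMod.val_injective 12) (Finset.geomSum_injective le_rfl h)

/-- The binary codes of the 12 translates and the 12 reflections of `S`, without repetitions. -/
def orbitCodes (S : Finset (ZMod 12)) : Finset ℕ :=
  Finset.univ.image (fun t : ZMod 12 => ∑ x ∈ S, 2 ^ (x + t).val) ∪
    Finset.univ.image (fun t : ZMod 12 => ∑ x ∈ S, 2 ^ (t - x).val)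

theorem mem_orbit (S S' : Finset (ZMod 12)) :
    S' ∈ orbit S ↔ S'.card = 3 ∧
      ∃ t : ZMod 12, S' = S.image (fun x => x + t) ∨ S' = S.image (fun x => t - x) := by
  unfold orbit
  rw [Finset.mem_filter]
  exact and_iff_right (Finset.mem_univ _)

theorem card_orbit_eq (S : Finset (ZMod 12)) (hS : S.card = 3) :
    (orbit S).card = (orbitCodes S).card := by
  rw [← Finset.card_image_of_injective (orbit S) code_injective]
  refine congrArg Finset.card ?_
  have h₁ (t : ZMod 12) : code (S.image (fun x => x + t)) = ∑ x ∈ S, 2 ^ (x + t).val :=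
    Finset.sum_image (add_left_injective t).injOn
  have h₂ (t : ZMod 12) : code (S.image (fun x => t - x)) = ∑ x ∈ S, 2 ^ (t - x).val :=
    Finset.sum_image sub_right_injective.injOn
  ext n
  simp only [orbitCodes, Finset.mem_image, Finset.mem_union, Finset.mem_univ,
    true_and, ← h₁, ← h₂]
  constructor
  · rintro ⟨S', hS', rfl⟩
    obtain ⟨-, t, rfl | rfl⟩ := (mem_orbit S S').mp hS'
    · exact Or.inl ⟨t, rfl⟩
    · exact Or.inr ⟨t, rfl⟩
  · rintro (⟨t, rfl⟩ | ⟨t, rfl⟩)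
    · exact ⟨_, (mem_orbit S _).mpr
        ⟨by rw [Finset.card_image_of_injective _ (add_left_injective t), hS], t, Or.inl rfl⟩, rfl⟩
    · exact ⟨_, (mem_orbit S _).mpr
        ⟨by rw [Finset.card_image_of_injective _ sub_right_injective, hS], t, Or.inr rfl⟩, rfl⟩

theorem orbit_translate (S : Finset (ZMod 12)) (c : ZMod 12) :
    orbit (S.image (fun x => x + c)) = orbit S := by
  ext S'
  simp only [mem_orbit, Finset.image_image, Function.comp_def]
  refine and_congr_right fun _ => ⟨?_, ?_⟩
  · rintro ⟨t, h | h⟩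
    · exact ⟨c + t, Or.inl (by simpa only [add_assoc] using h)⟩
    · exact ⟨t - c, Or.inr (by simpa only [sub_sub, add_comm c] using h)⟩
  · rintro ⟨t, h | h⟩
    · exact ⟨t - c, Or.inl (by simpa only [add_assoc, add_sub_cancel] using h)⟩
    · exact ⟨t + c, Or.inr (by simpa only [add_sub_add_right_eq_sub] using h)⟩

theorem numDistinct_translate (S : Finset (ZMod 12)) (c : ZMod 12) :
    numDistinct (S.image (fun x => x + c)) = numDistinct S := by
  unfold numDistinct
  refine congrArg Finset.card ?_
  ext n
  simp only [Finset.mem_image, Finset.mem_filter, Finset.mem_product, Prod.exists]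
  constructor
  · rintro ⟨_, _, ⟨⟨⟨x, hx, rfl⟩, ⟨y, hy, rfl⟩⟩, hne⟩, rfl⟩
    exact ⟨x, y, ⟨⟨hx, hy⟩, fun h => hne (by rw [h])⟩, by simp [dist12]⟩
  · rintro ⟨x, y, ⟨⟨hx, hy⟩, hne⟩, rfl⟩
    exact ⟨x + c, y + c, ⟨⟨⟨x, hx, rfl⟩, ⟨y, hy, rfl⟩⟩, fun h => hne (add_right_cancel h)⟩,
      by simp [dist12]⟩

/-- The finite verification for triads containing `0`. -/
theorem card_of_zero_mem : ∀ a b : ZMod 12, ({0, a, b} : Finset (ZMod 12)).card = 3 →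
    (numDistinct {0, a, b} = 3 → (orbitCodes {0, a, b}).card = 24) ∧
    (numDistinct {0, a, b} = 2 → (orbitCodes {0, a, b}).card = 12) ∧
    (numDistinct {0, a, b} = 1 → (orbitCodes {0, a, b}).card = 4) := by
  decide +kernel

/-- Orbit sizes of triads: 24 if all three pairwise distances are distinct, 12 if
exactly two are distinct, and 4 if all three are equal. -/
theorem orbit_card (S : Finset (ZMod 12)) (hS : S.card = 3) :
    (numDistinct S = 3 → (orbit S).card = 24) ∧
    (numDistinct S = 2 → (orbit S).card = 12) ∧
    (numDistinct S = 1 → (orbit S).card = 4) := by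
  obtain ⟨x, y, z, -, -, -, rfl⟩ := Finset.card_eq_three.mp hS
  have himg : ({x, y, z} : Finset (ZMod 12)).image (fun u => u + -x) = {0, y + -x, z + -x} := by
    simp
  have hcard : ({0, y + -x, z + -x} : Finset (ZMod 12)).card = 3 := by
    rw [← himg, Finset.card_image_of_injective _ (add_left_injective (-x)), hS]
  rw [← orbit_translate _ (-x), ← numDistinct_translate _ (-x), himg, card_orbit_eq _ hcard]
  exact card_of_zero_mem _ _ hcard
end
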